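/- Under Assumption 2.b, a pair (i,j) is a sequential maximization pair if and only if it is a pure-strategy Nash equilibrium of the cooperative game that fulfills the rules of the road (i.e., a Nash equilibrium maximizing the leader's payoff among all Nash equilibria of the cooperative game); in particular such Nash equilibria exist. -/

import Mathlib

open scoped Classical

noncomputable section

/-- Sequential game payoff of the leader (depends only on his own trajectory). -/
def aSeq {Γ1 : Type*} (κ : ℝ) (T1 : Γ1 → Prop) (p1 : Γ1 → ℝ) (i : Γ1) : ℝ :=
  if T1 i then κ else p1 i

/-- Follower payoff (same in the sequential and the cooperative game). -/
def bPay {Γ1 Γ2 : Type*} (κ lam : ℝ) (T2 : Γ2 → Prop) (C : Γ1 → Γ2 → Prop)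
    (p2 : Γ2 → ℝ) (i : Γ1) (j : Γ2) : ℝ :=
  if T2 j then κ else if C i j then lam else p2 j

/-- Cooperative game payoff of the leader. -/
def aPay {Γ1 Γ2 : Type*} (κ lam : ℝ) (T1 : Γ1 → Prop) (C : Γ1 → Γ2 → Prop)
    (p1 : Γ1 → ℝ) (i : Γ1) (j : Γ2) : ℝ :=
  if T1 i then κ else if C i j then lam else p1 i

/-- Blocking game payoff of the leader. -/
def aBl {Γ1 Γ2 : Type*} (κ lam w : ℝ) (T1 : Γ1 → Prop) (C : Γ1 → Γ2 → Prop)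
    (p1 : Γ1 → ℝ) (p2 : Γ2 → ℝ) (i : Γ1) (j : Γ2) : ℝ :=
  if T1 i then κ else if C i j then lam else if p1 i < p2 j then p1 i else p1 i + w

/-- Blocking game payoff of the follower. -/
def bBl {Γ1 Γ2 : Type*} (κ lam w : ℝ) (T2 : Γ2 → Prop) (C : Γ1 → Γ2 → Prop)
    (p1 : Γ1 → ℝ) (p2 : Γ2 → ℝ) (i : Γ1) (j : Γ2) : ℝ :=
  if T2 j then κ else if C i j then lam else if p1 i ≥ p2 j then p2 j else p2 j + w

/-- A trajectory pair is feasible: stays on track and does not collide. -/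
def Feasible {Γ1 Γ2 : Type*} (T1 : Γ1 → Prop) (T2 : Γ2 → Prop) (C : Γ1 → Γ2 → Prop)
    (i : Γ1) (j : Γ2) : Prop :=
  ¬ T1 i ∧ ¬ T2 j ∧ ¬ C i j

/-- Best-response set of player 2 to strategy `i` of player 1. -/
def BestResponse {Γ1 Γ2 : Type*} (B : Γ1 → Γ2 → ℝ) (i : Γ1) : Set Γ2 :=
  {j | ∀ j', B i j' ≤ B i j}

/-- Stackelberg equilibrium with player 1 as leader. -/
def StackelbergEq {Γ1 Γ2 : Type*} (A B : Γ1 → Γ2 → ℝ) (iStar : Γ1) (jStar : Γ2) : Prop :=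
  (∀ i, sInf (A i '' BestResponse B i) ≤ sInf (A iStar '' BestResponse B iStar)) ∧
  jStar ∈ BestResponse B iStar

/-- Pure-strategy Nash equilibrium. -/
def NashEq {Γ1 Γ2 : Type*} (A B : Γ1 → Γ2 → ℝ) (iStar : Γ1) (jStar : Γ2) : Prop :=
  (∀ i, A i jStar ≤ A iStar jStar) ∧ (∀ j, B iStar j ≤ B iStar jStar)

/-- Sequential maximization pair: the leader maximizes `aSeq`, the follower best responds. -/
def SeqMaxPair {Γ1 Γ2 : Type*} (κ lam : ℝ) (T1 : Γ1 → Prop) (T2 : Γ2 → Prop)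
    (C : Γ1 → Γ2 → Prop) (p1 : Γ1 → ℝ) (p2 : Γ2 → ℝ) (iS : Γ1) (jS : Γ2) : Prop :=
  (∀ i, aSeq κ T1 p1 i ≤ aSeq κ T1 p1 iS) ∧
  (∀ j, bPay κ lam T2 C p2 iS j ≤ bPay κ lam T2 C p2 iS jS)

/-- Assumption 2.a: a feasible trajectory pair exists. -/
def AssumptionA {Γ1 Γ2 : Type*} (T1 : Γ1 → Prop) (T2 : Γ2 → Prop)
    (C : Γ1 → Γ2 → Prop) : Prop :=
  ∃ i j, Feasible T1 T2 C i j

/-- Assumption 2.b. -/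
def AssumptionB {Γ1 Γ2 : Type*} (κ lam : ℝ) (T1 : Γ1 → Prop) (T2 : Γ2 → Prop)
    (C : Γ1 → Γ2 → Prop) (p1 : Γ1 → ℝ) (p2 : Γ2 → ℝ) : Prop :=
  (∃ i, ¬ T1 i) ∧
  ∃ jbar : Γ2, ∀ i' : Γ1, (∀ i, aSeq κ T1 p1 i ≤ aSeq κ T1 p1 i') →
    lam < bPay κ lam T2 C p2 i' jbar

/-- Blocking trajectory pair. -/
def BlockingPair {Γ1 Γ2 : Type*} (T1 : Γ1 → Prop) (T2 : Γ2 → Prop)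
    (C : Γ1 → Γ2 → Prop) (p1 : Γ1 → ℝ) (p2 : Γ2 → ℝ) (i : Γ1) (j : Γ2) : Prop :=
  Feasible T1 T2 C i j ∧ p2 j < p1 i ∧ ∀ jc, p2 j < p2 jc → (T2 jc ∨ C i jc)

section LeaderPayoff

variable {Γ1 Γ2 : Type*} {κ lam : ℝ} {T1 : Γ1 → Prop} {T2 : Γ2 → Prop}
  {C : Γ1 → Γ2 → Prop} {p1 : Γ1 → ℝ} {p2 : Γ2 → ℝ}

theorem aPay_le_aSeq (hlam0 : lam < 0) (hp1 : ∀ i, 0 < p1 i) (i : Γ1) (j : Γ2) :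
    aPay κ lam T1 C p1 i j ≤ aSeq κ T1 p1 i := by
  have := hp1 i
  unfold aPay aSeq
  split_ifs <;> linarith

theorem not_collide_of_lt_bPay (hκlam : κ < lam) {i : Γ1} {j : Γ2}
    (h : lam < bPay κ lam T2 C p2 i j) : ¬ C i j := by
  intro hC
  unfold bPay at h
  split_ifs at h <;> linarith

theorem aPay_eq_aSeq_of_not_collide {i : Γ1} {j : Γ2} (h : ¬ C i j) :
    aPay κ lam T1 C p1 i j = aSeq κ T1 p1 i := by
  simp [aPay, aSeq, h]

/-- Under `AssumptionB` a sequential maximization pair does not collide, so the leader gets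
his sequential payoff in the cooperative game. -/
theorem SeqMaxPair.aPay_eq_aSeq (hκlam : κ < lam) (hB : AssumptionB κ lam T1 T2 C p1 p2)
    {i : Γ1} {j : Γ2} (h : SeqMaxPair κ lam T1 T2 C p1 p2 i j) :
    aPay κ lam T1 C p1 i j = aSeq κ T1 p1 i := by
  obtain ⟨-, jbar, hj⟩ := hB
  exact aPay_eq_aSeq_of_not_collide
    (not_collide_of_lt_bPay hκlam ((hj i h.1).trans_le (h.2 jbar)))

theorem SeqMaxPair.aPay_le (hκlam : κ < lam) (hlam0 : lam < 0) (hp1 : ∀ i, 0 < p1 i)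
    (hB : AssumptionB κ lam T1 T2 C p1 p2) {i : Γ1} {j : Γ2}
    (h : SeqMaxPair κ lam T1 T2 C p1 p2 i j) (i' : Γ1) (j' : Γ2) :
    aPay κ lam T1 C p1 i' j' ≤ aPay κ lam T1 C p1 i j := by
  rw [h.aPay_eq_aSeq hκlam hB]
  exact (aPay_le_aSeq hlam0 hp1 i' j').trans (h.1 i')

theorem SeqMaxPair.nashEq (hκlam : κ < lam) (hlam0 : lam < 0) (hp1 : ∀ i, 0 < p1 i)
    (hB : AssumptionB κ lam T1 T2 C p1 p2) {i : Γ1} {j : Γ2}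
    (h : SeqMaxPair κ lam T1 T2 C p1 p2 i j) :
    NashEq (aPay κ lam T1 C p1) (bPay κ lam T2 C p2) i j :=
  ⟨fun i' => h.aPay_le hκlam hlam0 hp1 hB i' j, h.2⟩

theorem exists_seqMaxPair [Finite Γ1] [Finite Γ2] [Nonempty Γ1] [Nonempty Γ2] :
    ∃ i j, SeqMaxPair κ lam T1 T2 C p1 p2 i j := by
  obtain ⟨i, hi⟩ := Finite.exists_max (aSeq κ T1 p1)
  obtain ⟨j, hj⟩ := Finite.exists_max (bPay κ lam T2 C p2 i)
  exact ⟨i, j, hi, hj⟩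

end LeaderPayoff

theorem stmt10 {Γ1 Γ2 : Type*} [Fintype Γ1] [Fintype Γ2] [Nonempty Γ1] [Nonempty Γ2]
    (κ lam : ℝ) (hκlam : κ < lam) (hlam0 : lam < 0)
    (T1 : Γ1 → Prop) (T2 : Γ2 → Prop) (C : Γ1 → Γ2 → Prop)
    (p1 : Γ1 → ℝ) (p2 : Γ2 → ℝ)
    (hp1 : ∀ i, 0 < p1 i) (hp2 : ∀ j, 0 < p2 j)
    (hB : AssumptionB κ lam T1 T2 C p1 p2) :
    (∀ (i : Γ1) (j : Γ2), SeqMaxPair κ lam T1 T2 C p1 p2 i j ↔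
      (NashEq (aPay κ lam T1 C p1) (bPay κ lam T2 C p2) i j ∧
        ∀ (i' : Γ1) (j' : Γ2), NashEq (aPay κ lam T1 C p1) (bPay κ lam T2 C p2) i' j' →
          aPay κ lam T1 C p1 i' j' ≤ aPay κ lam T1 C p1 i j)) ∧
    ∃ (i : Γ1) (j : Γ2),
      NashEq (aPay κ lam T1 C p1) (bPay κ lam T2 C p2) i j ∧
      ∀ (i' : Γ1) (j' : Γ2), NashEq (aPay κ lam T1 C p1) (bPay κ lam T2 C p2) i' j' →
        aPay κ lam T1 C p1 i' j' ≤ aPay κ lam T1 C p1 i j := by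
  obtain ⟨i₀, j₀, h₀⟩ := exists_seqMaxPair (κ := κ) (lam := lam) (T1 := T1) (T2 := T2)
    (C := C) (p1 := p1) (p2 := p2)
  have nash₀ := h₀.nashEq hκlam hlam0 hp1 hB
  refine ⟨fun i j => ⟨fun h => ⟨h.nashEq hκlam hlam0 hp1 hB,
    fun i' j' _ => h.aPay_le hκlam hlam0 hp1 hB i' j'⟩, ?_⟩,
    i₀, j₀, nash₀, fun i' j' _ => h₀.aPay_le hκlam hlam0 hp1 hB i' j'⟩
  rintro ⟨hN, hmax⟩
  refine ⟨fun i' => ?_, hN.2⟩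
  calc aSeq κ T1 p1 i' ≤ aSeq κ T1 p1 i₀ := h₀.1 i'
    _ = aPay κ lam T1 C p1 i₀ j₀ := (h₀.aPay_eq_aSeq hκlam hB).symm
    _ ≤ aPay κ lam T1 C p1 i j := hmax i₀ j₀ nash₀
    _ ≤ aSeq κ T1 p1 i := aPay_le_aSeq hlam0 hp1 i j

end
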